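/- arXiv:1804.01423 — 4 statements merged into one kernel-verified Lean document; each statement's English description precedes it below -/
import Mathlib

section
/- Let (g, d) be a differential Lie algebra over a field K, i.e., g is a Lie algebra with bracket [-,-] and d : g → g is a linear map satisfying d ∘ d = 0 and d[x,y] = [dx,y] + [x,dy] for all x, y in g. Then the derived bracket [x,y]_d := [x, dy] satisfies the Leibniz identity [x,[y,z]_d]_d = [[x,y]_d, z]_d - [[x,z]_d, y]_d for all x, y, z in g; hence (g, [-,-]_d) is a Leibniz algebra. -/
/-- If `(g, d)` is a differential Lie algebra (a Lie algebra with a linear map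
`d : g → g` satisfying `d ∘ d = 0` which is a derivation of the Lie bracket), then the
derived bracket `[x,y]_d := [x, d y]` satisfies the Leibniz identity
`[x,[y,z]_d]_d = [[x,y]_d, z]_d - [[x,z]_d, y]_d`; hence `(g, [-,-]_d)` is a Leibniz
algebra. -/
theorem derived_bracket_is_leibniz
    {K : Type*} [Field K] {g : Type*} [LieRing g] [LieAlgebra K g]
    (d : g →ₗ[K] g)
    (hd2 : ∀ x : g, d (d x) = 0)
    (hder : ∀ x y : g, d ⁅x, y⁆ = ⁅d x, y⁆ + ⁅x, d y⁆) :
    ∀ x y z : g, ⁅x, d ⁅y, d z⁆⁆ = ⁅⁅x, d y⁆, d z⁆ - ⁅⁅x, d z⁆, d y⁆ := by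
  intro x y z
  rw [hder, hd2, lie_zero, add_zero, leibniz_lie, ← lie_skew (d y) ⁅x, d z⁆, sub_eq_add_neg]
end

section
/- Let g be a Leibniz algebra over a field K and A a K-vector space. For an n-multilinear map c : gⁿ → A, define the (n+1)-multilinear map δc by (δc)(x₁,…,x_{n+1}) = Σ_{1 ≤ i < j ≤ n+1} (-1)ʲ c(x₁,…,x_{i-1},[x_i,x_j],x_{i+1},…,x̂_j,…,x_{n+1}), where x̂_j means that the argument x_j is omitted. Then δ(δc) = 0 for every n-multilinear map c : gⁿ → A. -/
/-- The tuple `(x₁, …, x_{i-1}, [x_i,x_j], x_{i+1}, …, x̂_j, …, x_{n+1})` obtained from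
`(x₁, …, x_{n+1})` by replacing the `i`-th entry with the bracket `[x_i, x_j]` and
omitting the `j`-th entry (for `i < j`), written with 0-based indices. -/
def leibnizCochainTuple {g : Type*} (b : g → g → g) {n : ℕ}
    (x : Fin (n + 1) → g) (i j : Fin (n + 1)) : Fin n → g :=
  fun k =>
    if (k : ℕ) = (i : ℕ) then b (x i) (x j)
    else if h : (k : ℕ) < (j : ℕ) then x ⟨(k : ℕ), by omega⟩
    else x ⟨(k : ℕ) + 1, by omega⟩

/-- The Leibniz coboundary of an `n`-cochain `c : gⁿ → A`:
`(δc)(x₁,…,x_{n+1}) = Σ_{1 ≤ i < j ≤ n+1} (-1)ʲ c(x₁,…,x_{i-1},[x_i,x_j],…,x̂_j,…,x_{n+1})`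
(the sign `(-1)ʲ` refers to the 1-based index `j`). -/
def leibnizDelta {g A : Type*} [AddCommGroup A] (b : g → g → g) {n : ℕ}
    (c : (Fin n → g) → A) : (Fin (n + 1) → g) → A :=
  fun x => ∑ p : Fin (n + 1) × Fin (n + 1),
    if p.1 < p.2 then
      ((-1 : ℤ) ^ ((p.2 : ℕ) + 1)) • c (leibnizCochainTuple b x p.1 p.2)
    else 0

/-- The `m`-th index of `Fin (n + 2)` after omitting `j` and `l`. -/
def leibSkip {n : ℕ} (j l : Fin (n + 2)) (m : Fin n) : Fin (n + 2) :=
  ⟨if (m : ℕ) < min (j : ℕ) (l : ℕ) then (m : ℕ)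
    else if (m : ℕ) + 1 < max (j : ℕ) (l : ℕ) then (m : ℕ) + 1 else (m : ℕ) + 2, by
    split_ifs <;> omega⟩

theorem leibSkip_comm {n : ℕ} (j l : Fin (n + 2)) : leibSkip j l = leibSkip (n := n) l j := by
  funext m
  simp only [leibSkip, min_comm, max_comm]

theorem leibSkip_injective {n : ℕ} (j l : Fin (n + 2)) :
    Function.Injective (leibSkip (n := n) j l) := by
  intro a b h
  simp only [leibSkip, Fin.mk.injEq] at h
  apply Fin.ext
  split_ifs at h <;> omega

theorem leibSkip_surj {n : ℕ} (j l a : Fin (n + 2)) (hjl : j ≠ l) (hj : a ≠ j) (hl : a ≠ l) :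
    ∃ m : Fin n, leibSkip j l m = a := by
  have hjl' : (j : ℕ) ≠ l := fun h => hjl (Fin.ext h)
  have hj' : (a : ℕ) ≠ j := fun h => hj (Fin.ext h)
  have hl' : (a : ℕ) ≠ l := fun h => hl (Fin.ext h)
  by_cases h1 : (a : ℕ) < min (j : ℕ) (l : ℕ)
  · refine ⟨⟨a, by omega⟩, Fin.ext ?_⟩
    simp only [leibSkip]
    split_ifs <;> omega
  · by_cases h2 : (a : ℕ) < max (j : ℕ) (l : ℕ)
    · refine ⟨⟨a - 1, by omega⟩, Fin.ext ?_⟩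
      simp only [leibSkip]
      split_ifs <;> omega
    · refine ⟨⟨a - 2, by omega⟩, Fin.ext ?_⟩
      simp only [leibSkip]
      split_ifs <;> omega

/-- The sign attached to removing `j` first and then `l`. -/
def leibSign {N : ℕ} (j l : Fin N) : ℤ :=
  if l < j then (-1) ^ ((j : ℕ) + l) else -(-1) ^ ((j : ℕ) + l)

theorem leibSign_swap {N : ℕ} (j l : Fin N) (h : j ≠ l) : leibSign l j = - leibSign j l := by
  unfold leibSign
  rcases lt_or_gt_of_ne h with h | h
  · rw [if_pos h, if_neg h.not_gt, add_comm, neg_neg]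
  · rw [if_neg h.not_gt, if_pos h, add_comm]

theorem leibTuple_eq {g : Type*} (b : g → g → g) {n : ℕ}
    (x : Fin (n + 1) → g) (i j : Fin (n + 1)) (h : i < j) :
    leibnizCochainTuple b x i j = fun m => Function.update x i (b (x i) (x j)) (j.succAbove m) := by
  funext m
  have h' : (i : ℕ) < j := h
  simp only [leibnizCochainTuple, Function.update_apply, Fin.succAbove, Fin.lt_def, Fin.ext_iff,
    Fin.val_castSucc]
  by_cases h1 : (m : ℕ) < j
  · simp only [h1, if_true, dite_true, Fin.val_castSucc]
    rfl
  · have h2 : ¬ ((m : ℕ) = i) := by omega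
    have h3 : ¬ ((m : ℕ) + 1 = i) := by omega
    simp only [h1, h2, if_false, dite_false, Fin.val_succ, h3]
    rfl

theorem leibSkip_succAbove {n : ℕ} (j : Fin (n + 2)) (l : Fin (n + 1)) (m : Fin n) :
    j.succAbove (l.succAbove m) = leibSkip j (j.succAbove l) m := by
  apply Fin.ext
  simp only [leibSkip, Fin.succAbove, Fin.lt_def, Fin.val_castSucc]
  split_ifs <;> simp only [Fin.val_castSucc, Fin.val_succ] at * <;> omega

theorem leibSign_succAbove {n : ℕ} (j : Fin (n + 2)) (l : Fin (n + 1)) :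
    (-1 : ℤ) ^ ((j : ℕ) + 1) * (-1 : ℤ) ^ ((l : ℕ) + 1) = leibSign j (j.succAbove l) := by
  unfold leibSign
  simp only [Fin.succAbove, Fin.lt_def, Fin.val_castSucc]
  by_cases h : (l : ℕ) < j
  · simp only [h, if_true, Fin.val_castSucc]
    ring
  · have h2 : ¬ ((l : ℕ) + 1 < j) := by omega
    simp only [h, if_false, Fin.val_succ, h2]
    ring

/-- The full tuple after two bracket substitutions. -/
def leibW {g : Type*} (b : g → g → g) {N : ℕ} (x : Fin N → g) (i j k l : Fin N) : Fin N → g :=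
  Function.update (Function.update x i (b (x i) (x j))) k
    (b (Function.update x i (b (x i) (x j)) k) (Function.update x i (b (x i) (x j)) l))

/-- The general term of `δδc`. -/
def leibG {g A : Type*} [AddCommGroup A] (b : g → g → g) {n : ℕ}
    (c : (Fin n → g) → A) (x : Fin (n + 2) → g) (i j k l : Fin (n + 2)) : A :=
  if i < j ∧ k < l ∧ k ≠ j ∧ l ≠ j then
    leibSign j l • c (fun m => leibW b x i j k l (leibSkip j l m)) else 0

theorem leibG_succAbove {g A : Type*} [AddCommGroup A] (b : g → g → g) {n : ℕ}
    (c : (Fin n → g) → A) (x : Fin (n + 2) → g) (i j : Fin (n + 2)) (hij : i < j)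
    (k l : Fin (n + 1)) :
    leibG b c x i j (j.succAbove k) (j.succAbove l) =
      (-1 : ℤ) ^ ((j : ℕ) + 1) • (if k < l then (-1 : ℤ) ^ ((l : ℕ) + 1) •
        c (leibnizCochainTuple b (leibnizCochainTuple b x i j) k l) else 0) := by
  unfold leibG
  by_cases h : k < l
  · have h1 : j.succAbove k < j.succAbove l := (Fin.strictMono_succAbove j) h
    rw [if_pos ⟨hij, h1, Fin.succAbove_ne j k, Fin.succAbove_ne j l⟩, if_pos h, smul_smul,
      leibSign_succAbove, leibTuple_eq b _ k l h, leibTuple_eq b x i j hij]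
    congr 2
    funext m
    rw [← leibSkip_succAbove]
    simp only [leibW, Function.update_apply, (Fin.succAbove_right_injective (p := j)).eq_iff]
  · have h1 : ¬ j.succAbove k < j.succAbove l := by
      rwa [(Fin.strictMono_succAbove j).lt_iff_lt]
    rw [if_neg (fun hh => h1 hh.2.1), if_neg h, smul_zero]

theorem leibDD_eq {g A : Type*} [AddCommGroup A] (b : g → g → g) {n : ℕ}
    (c : (Fin n → g) → A) (x : Fin (n + 2) → g) :
    leibnizDelta b (leibnizDelta b c) x = ∑ i, ∑ j, ∑ k, ∑ l, leibG b c x i j k l := by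
  unfold leibnizDelta
  rw [Fintype.sum_prod_type]
  refine Finset.sum_congr rfl fun i _ => Finset.sum_congr rfl fun j _ => ?_
  by_cases hij : i < j
  · simp only [hij, if_true]
    rw [Fintype.sum_prod_type, Finset.smul_sum, Fin.sum_univ_succAbove _ j]
    have h0 : ∑ l, leibG b c x i j j l = 0 :=
      Finset.sum_eq_zero fun l _ => if_neg fun h => h.2.2.1 rfl
    rw [h0, zero_add]
    refine Finset.sum_congr rfl fun k _ => ?_
    have h1 : leibG b c x i j (j.succAbove k) j = 0 := if_neg fun h => h.2.2.2 rfl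
    rw [Finset.smul_sum, Fin.sum_univ_succAbove _ j, h1, zero_add]
    exact Finset.sum_congr rfl fun l _ => (leibG_succAbove b c x i j hij k l).symm
  · simp [hij, leibG]

theorem leibD_sum {g A : Type*} [AddCommGroup A] (b : g → g → g) {n : ℕ}
    (c : (Fin n → g) → A) (x : Fin (n + 2) → g) :
    ∑ i, ∑ j, ∑ k, ∑ l, (if i ≠ k ∧ i ≠ l then leibG b c x i j k l else 0) = 0 := by
  have key : ∑ p : Fin (n + 2) × Fin (n + 2) × Fin (n + 2) × Fin (n + 2),
      (if p.1 ≠ p.2.2.1 ∧ p.1 ≠ p.2.2.2 then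
        leibG b c x p.1 p.2.1 p.2.2.1 p.2.2.2 else 0) = 0 := by
    refine Finset.sum_involution (fun p _ => (p.2.2.1, p.2.2.2, p.1, p.2.1)) ?_ ?_ ?_ ?_
    · rintro ⟨i, j, k, l⟩ -
      simp only [leibG, ← ite_and]
      by_cases h : (i ≠ k ∧ i ≠ l) ∧ i < j ∧ k < l ∧ k ≠ j ∧ l ≠ j
      · obtain ⟨⟨h1, h2⟩, h3, h4, h5, h6⟩ := h
        rw [if_pos ⟨⟨h1, h2⟩, h3, h4, h5, h6⟩,
          if_pos ⟨⟨h1.symm, h5⟩, h4, h3, h2, h6.symm⟩, leibSign_swap j l h6.symm,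
          leibSkip_comm l j]
        have : leibW b x k l i j = leibW b x i j k l := by
          unfold leibW
          rw [Function.update_of_ne h1, Function.update_of_ne h5.symm,
            Function.update_of_ne h1.symm, Function.update_of_ne h2.symm,
            Function.update_comm h1]
        rw [this, neg_smul, add_neg_cancel]
      · rw [if_neg h, if_neg (by tauto), add_zero]
    · rintro ⟨i, j, k, l⟩ - hne heq
      simp only [Prod.mk.injEq] at heq
      apply hne
      simp [heq.1]
    · simp
    · simp
  simpa only [Fintype.sum_prod_type] using key

/-- For a Leibniz algebra `g` over a field `K` and a `K`-vector space `A`, the Leibniz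
coboundary satisfies `δ(δc) = 0` for every `n`-multilinear cochain `c : gⁿ → A`. -/
theorem leibniz_delta_squared_zero
    {K : Type*} [Field K] {g : Type*} [AddCommGroup g] [Module K g]
    {A : Type*} [AddCommGroup A] [Module K A]
    (b : g →ₗ[K] g →ₗ[K] g)
    (hleib : ∀ x y z : g, b x (b y z) = b (b x y) z - b (b x z) y)
    {n : ℕ} (c : MultilinearMap K (fun _ : Fin n => g) A) :
    ∀ x : Fin (n + 2) → g,
      leibnizDelta (fun u v => b u v) (leibnizDelta (fun u v => b u v) ⇑c) x = 0 := by
  intro x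
  have hsub : ∀ (j l a : Fin (n + 2)) (_ : j ≠ l) (_ : a ≠ j) (_ : a ≠ l) (u v : g),
      c (fun m => Function.update x a (u - v) (leibSkip j l m)) =
        c (fun m => Function.update x a u (leibSkip j l m)) -
        c (fun m => Function.update x a v (leibSkip j l m)) := by
    intro j l a h1 h2 h3 u v
    obtain ⟨m, rfl⟩ := leibSkip_surj j l a h1 h2 h3
    have e : ∀ w : g, (fun m' => Function.update x (leibSkip j l m) w (leibSkip j l m')) =
        Function.update (fun m' => x (leibSkip j l m')) m w := fun w =>
      Function.update_comp_eq_of_injective x (leibSkip_injective j l) m w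
    rw [e, e, e, c.map_update_sub]
  rw [leibDD_eq]
  set b' : g → g → g := fun u v => b u v with hb'
  let E : Fin (n + 2) → Fin (n + 2) → Fin (n + 2) → A := fun a j l =>
    leibG b' c x a j a l
  let H : Fin (n + 2) → Fin (n + 2) → Fin (n + 2) → A := fun a i j =>
    leibG b' c x i j a i
  have split : ∀ i j k l, leibG b' c x i j k l =
      (if i ≠ k ∧ i ≠ l then leibG b' c x i j k l else 0) +
      ((if k = i then E i j l else 0) + (if l = i then H k i j else 0)) := by
    intro i j k l
    by_cases h1 : k = i
    · subst h1
      by_cases h2 : l = k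
      · subst h2
        simp [E, H, leibG]
      · simp [E, h2]
    · by_cases h2 : l = i
      · subst h2
        simp [H, h1]
      · simp [h1, h2, Ne.symm h1, Ne.symm h2]
  have hS : ∑ i, ∑ j, ∑ k, ∑ l, leibG b' c x i j k l =
      ∑ a, ∑ j, ∑ l, (E a j l + H a j l) := by
    have hE : ∑ i, ∑ j, ∑ k, ∑ l, (if k = i then E i j l else 0) = ∑ a, ∑ j, ∑ l, E a j l := by
      refine Finset.sum_congr rfl fun i _ => Finset.sum_congr rfl fun j _ => ?_
      rw [Finset.sum_comm]
      simp
    have hH : ∑ i, ∑ j, ∑ k, ∑ l, (if l = i then H k i j else 0) = ∑ a, ∑ j, ∑ l, H a j l := by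
      simp only [Finset.sum_ite_eq', Finset.mem_univ, if_true]
      rw [Finset.sum_congr rfl fun i _ => Finset.sum_comm]
      rw [Finset.sum_comm]
    simp only [Finset.sum_add_distrib]
    rw [← hE, ← hH]
    have hD := leibD_sum b' c x
    conv_lhs => enter [2, i, 2, j, 2, k, 2, l]; rw [split i j k l]
    simp only [Finset.sum_add_distrib]
    rw [hD, zero_add]
  rw [hS]
  refine Finset.sum_eq_zero fun a _ => ?_
  have hE2 : ∑ j, ∑ l, E a j l =
      ∑ j, ∑ l, ((if j < l then E a j l else 0) + (if j < l then E a l j else 0)) := by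
    simp only [Finset.sum_add_distrib]
    rw [Finset.sum_comm (f := fun j l => if j < l then E a l j else 0)]
    simp only [← Finset.sum_add_distrib]
    refine Finset.sum_congr rfl fun j _ => Finset.sum_congr rfl fun l _ => ?_
    rcases lt_trichotomy j l with h | h | h
    · simp [h, h.not_gt]
    · subst h
      simp [E, leibG]
    · simp [h, h.not_gt]
  simp only [Finset.sum_add_distrib] at hE2 ⊢
  rw [hE2]
  simp only [← Finset.sum_add_distrib]
  refine Finset.sum_eq_zero fun p _ => Finset.sum_eq_zero fun q _ => ?_
  simp only [E, H, leibG]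
  by_cases hpq : p < q
  · by_cases hap : a < p
    · have haq : a < q := hap.trans hpq
      simp only [hpq, hap, haq, hap.ne, haq.ne, hpq.ne, hpq.ne', ne_eq, not_false_eq_true,
        and_self, if_true]
      have w1 : leibW b' x a p a q = Function.update x a (b (b (x a) (x p)) (x q)) := by
        simp [leibW, hb', haq.ne']
      have w2 : leibW b' x a q a p = Function.update x a (b (b (x a) (x q)) (x p)) := by
        simp [leibW, hb', hap.ne']
      have w4 : ∀ m, leibW b' x p q a p (leibSkip q p m) =
          Function.update x a (b (x a) (b (x p) (x q))) (leibSkip q p m) := by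
        intro m
        have hm : leibSkip q p m ≠ p := by
          intro h
          have h := congrArg Fin.val h
          have h' : (p : ℕ) < q := hpq
          simp only [leibSkip] at h
          split_ifs at h <;> omega
        simp [leibW, hb', hap.ne, Function.update_apply, hm]
      simp only [w4]
      rw [w1, w2, hleib, hsub q p a hpq.ne' haq.ne hap.ne, leibSign_swap q p hpq.ne',
        leibSkip_comm p q, smul_sub]
      simp only [neg_smul]
      abel
    · simp [hap]
  · simp [hpq]
end

section
/- Let g be a Leibniz algebra over a field K and A a commutative associative K-algebra. For multilinear cochains c : gᵖ → A and d : g^q → A, the Leibniz coboundary δ and the shuffle cup product ∪ satisfy the derivation formula δ(c∪d) = (δc)∪d + (-1)ᵖ c∪(δd). -/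
/-- `σ` is an `(a,b)`-shuffle: a permutation of `{1,…,a+b}` (here `Fin (a+b)`, 0-based)
which is strictly increasing on the first `a` indices and on the last `b` indices. -/
def IsShuffle (a b : ℕ) (σ : Equiv.Perm (Fin (a + b))) : Prop :=
  (∀ i j : Fin (a + b), (i : ℕ) < (j : ℕ) → (j : ℕ) < a → σ i < σ j) ∧
  (∀ i j : Fin (a + b), (i : ℕ) < (j : ℕ) → a ≤ (i : ℕ) → σ i < σ j)

open scoped Classical

/-- The shuffle cup product of cochains `c : g^{p+1} → A` and `d : g^{q+1} → A` with
values in a commutative associative algebra `A`: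
`(c∪d)(x₁,…,x_{p+q+2}) = Σ_σ sgn(σ) c(x₁, x_{1+σ(1)},…,x_{1+σ(p)}) ⬝ d(x_{1+σ(p+1)},…,x_{1+σ(p+q+1)})`,
the sum being over all `(p, q+1)`-shuffles `σ` (0-based indexing in the formula below). -/
noncomputable def cupProd {g A : Type*} [CommRing A] {p q : ℕ}
    (c : (Fin (p + 1) → g) → A) (d : (Fin (q + 1) → g) → A) :
    (Fin (p + q + 2) → g) → A :=
  fun x => ∑ σ : Equiv.Perm (Fin (p + (q + 1))),
    if IsShuffle p (q + 1) σ then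
      ((Equiv.Perm.sign σ : ℤˣ) : ℤ) •
        (c (fun i => if h : (i : ℕ) = 0 then x ⟨0, by omega⟩
              else x ⟨(σ ⟨(i : ℕ) - 1, by omega⟩ : ℕ) + 1, by omega⟩) *
         d (fun j => x ⟨(σ ⟨p + (j : ℕ), by omega⟩ : ℕ) + 1, by omega⟩))
    else 0

namespace LeibAux

open Finset

/-- insertion of the value `j` at place `i` in a permutation -/
def ins {n : ℕ} (i j : Fin (n + 1)) (σ : Equiv.Perm (Fin n)) : Equiv.Perm (Fin (n + 1)) :=
  i.cycleRange.trans ((Equiv.Perm.decomposeFin.symm (0, σ)).trans j.cycleRange.symm)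

lemma ins_self {n : ℕ} (i j : Fin (n + 1)) (σ : Equiv.Perm (Fin n)) : ins i j σ i = j := by
  simp [ins]

lemma ins_succAbove {n : ℕ} (i j : Fin (n + 1)) (σ : Equiv.Perm (Fin n)) (k : Fin n) :
    ins i j σ (i.succAbove k) = j.succAbove (σ k) := by
  simp [ins, Fin.cycleRange_succAbove, Fin.cycleRange_symm_succ]

lemma sign_ins {n : ℕ} (i j : Fin (n + 1)) (σ : Equiv.Perm (Fin n)) :
    ((Equiv.Perm.sign (ins i j σ) : ℤˣ) : ℤ) =
      (-1) ^ ((i : ℕ) + j) * ((Equiv.Perm.sign σ : ℤˣ) : ℤ) := by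
  simp [ins, Equiv.Perm.sign_trans, Fin.sign_cycleRange, Equiv.Perm.sign_symm, pow_add]
  ring

lemma ins_bij {n : ℕ} (i : Fin (n + 1)) :
    Function.Bijective (fun w : Fin (n + 1) × Equiv.Perm (Fin n) => ins i w.1 w.2) := by
  rw [Fintype.bijective_iff_injective_and_card]
  refine ⟨?_, Fintype.card_congr Equiv.Perm.decomposeFin.symm⟩
  rintro ⟨j, σ⟩ ⟨j', σ'⟩ h
  simp only at h
  have h1 : j = j' := by
    have := congrArg (fun τ => τ i) h
    simpa [ins_self] using this
  subst h1
  congr 1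
  ext k : 1
  have := congrArg (fun τ => τ (i.succAbove k)) h
  simpa [ins_succAbove] using this

lemma sum_ins {n : ℕ} {M : Type*} [AddCommMonoid M] (i : Fin (n + 1))
    (f : Equiv.Perm (Fin (n + 1)) → M) :
    ∑ τ, f τ = ∑ j, ∑ σ, f (ins i j σ) := by
  rw [← Fintype.sum_prod_type']
  exact ((ins_bij i).sum_comp f).symm

lemma insertNth_unique {a n : ℕ} (f : Fin a → Fin n) (hf : StrictMono f) (j : Fin (n + 1)) :
    ∃! l : Fin (a + 1),
      StrictMono (l.insertNth (α := fun _ => Fin (n + 1)) j (fun k => j.succAbove (f k))) := by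
  classical
  have hrange : ∀ l : Fin (a + 1),
      Set.range (l.insertNth (α := fun _ => Fin (n + 1)) j (fun k => j.succAbove (f k))) =
        insert j (Set.range fun k => j.succAbove (f k)) := by
    intro l
    ext y
    simp only [Set.mem_range, Set.mem_insert_iff, Fin.exists_iff_succAbove l,
      Fin.insertNth_apply_same, Fin.insertNth_apply_succAbove, eq_comm]
  have hmono : StrictMono (fun k => j.succAbove (f k)) := (Fin.strictMono_succAbove j).comp hf
  have hj : ∀ k, j.succAbove (f k) ≠ j := fun k => Fin.succAbove_ne _ _
  refine existsUnique_of_exists_of_unique ?_ ?_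
  · set S : Finset (Fin (n + 1)) := insert j (Finset.univ.image fun k => j.succAbove (f k)) with hS
    have hcard : S.card = a + 1 := by
      rw [hS, Finset.card_insert_of_notMem, Finset.card_image_of_injective _ hmono.injective]
      · simp
      · simp [hj]
    let G := S.orderEmbOfFin hcard
    have hG : Set.range G = insert j (Set.range fun k => j.succAbove (f k)) := by
      rw [Finset.range_orderEmbOfFin, hS]; simp
    obtain ⟨l, hl⟩ : ∃ l, G l = j := by
      have : j ∈ Set.range G := by rw [hG]; simp
      exact this
    refine ⟨l, ?_⟩
    have h2 : (fun k => G (l.succAbove k)) = fun k => j.succAbove (f k) := by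
      have hm : StrictMono (fun k => G (l.succAbove k)) :=
        G.strictMono.comp (Fin.strictMono_succAbove l)
      apply (StrictMono.range_inj hm hmono).1
      have : Set.range (fun k => G (l.succAbove k)) = Set.range G \ {j} := by
        ext y
        simp only [Set.mem_range, Set.mem_sdiff, Set.mem_singleton_iff, Fin.exists_iff_succAbove l, hl]
        constructor
        · rintro ⟨k, rfl⟩
          refine ⟨Or.inr ⟨k, rfl⟩, ?_⟩
          rw [← hl]
          exact fun h => Fin.succAbove_ne _ _ (G.injective h)
        · rintro ⟨h | h, h'⟩
          · exact absurd h.symm h'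
          · exact h
      rw [this, hG]
      ext y
      simp only [Set.mem_sdiff, Set.mem_insert_iff, Set.mem_range, Set.mem_singleton_iff]
      constructor
      · rintro ⟨h | h, h'⟩
        · exact absurd h h'
        · exact h
      · rintro ⟨k, rfl⟩
        exact ⟨Or.inr ⟨k, rfl⟩, hj k⟩
    have h3 : l.insertNth (α := fun _ => Fin (n + 1)) j (fun k => j.succAbove (f k)) = G := by
      rw [Fin.insertNth_eq_iff]
      exact ⟨hl.symm, h2.symm⟩
    rw [h3]
    exact G.strictMono
  · intro l l' h h'
    have := (StrictMono.range_inj h h').1 ((hrange l).trans (hrange l').symm)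
    apply h'.injective
    rw [← this]
    simp [this]

lemma strictMono_of_insertNth {a n : ℕ} (f : Fin a → Fin n) (j : Fin (n + 1)) (l : Fin (a + 1))
    (h : StrictMono (l.insertNth (α := fun _ => Fin (n + 1)) j (fun k => j.succAbove (f k)))) :
    StrictMono f := by
  intro x y hxy
  have := h (Fin.strictMono_succAbove l hxy)
  simpa [Fin.succAbove_lt_succAbove_iff] using this

lemma sum_insertNth {a n : ℕ} {M : Type*} [AddCommMonoid M] (f : Fin a → Fin n)
    (j : Fin (n + 1)) (T : M) :
    (∑ l : Fin (a + 1),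
      if StrictMono (l.insertNth (α := fun _ => Fin (n + 1)) j (fun k => j.succAbove (f k)))
      then T else 0) = if StrictMono f then T else 0 := by
  split_ifs with hf
  · obtain ⟨l, hl, hu⟩ := insertNth_unique f hf j
    rw [Finset.sum_eq_single l]
    · rw [if_pos hl]
    · intro l' _ hne
      rw [if_neg]
      exact fun h => hne (hu l' h)
    · simp
  · apply Finset.sum_eq_zero
    intro l _
    rw [if_neg]
    exact fun h => hf (strictMono_of_insertNth f j l h)

/-- tuple, in `succAbove` form -/
def tup {g : Type*} (b : g → g → g) {n : ℕ} (x : Fin (n + 1) → g) (m : Fin n)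
    (j : Fin (n + 1)) : Fin n → g :=
  fun k => if k = m then b (x (j.succAbove m)) (x j) else x (j.succAbove k)

lemma tuple_eq {g : Type*} (b : g → g → g) {n : ℕ} (x : Fin (n + 1) → g) (m : Fin n)
    (j : Fin (n + 1)) (h : m.castSucc < j) :
    leibnizCochainTuple b x (j.succAbove m) j = tup b x m j := by
  funext k
  unfold leibnizCochainTuple tup
  rw [Fin.succAbove_of_castSucc_lt _ _ h]
  simp only [Fin.val_castSucc, Fin.ext_iff]
  split_ifs with h1 h2
  · rfl
  · congr 1
    rw [Fin.succAbove_of_castSucc_lt]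
    · rfl
    · exact h2
  · congr 1
    rw [Fin.succAbove_of_le_castSucc]
    · rfl
    · rw [Fin.le_def]; simpa using h2

lemma delta_eq {g A : Type*} [AddCommGroup A] (b : g → g → g) {n : ℕ}
    (c : (Fin n → g) → A) (x : Fin (n + 1) → g) :
    leibnizDelta b c x = ∑ j : Fin (n + 1), ∑ m : Fin n,
      if m.castSucc < j then ((-1 : ℤ) ^ ((j : ℕ) + 1)) • c (tup b x m j) else 0 := by
  unfold leibnizDelta
  rw [Fintype.sum_prod_type_right]
  refine Finset.sum_congr rfl fun j _ => ?_
  rw [Fin.sum_univ_succAbove _ j]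
  simp only [lt_irrefl, if_false, zero_add, Fin.succAbove_lt_iff_castSucc_lt]
  refine Finset.sum_congr rfl fun m _ => ?_
  split_ifs with h
  · rw [tuple_eq b x m j h]
  · rfl

/-- for successor cochain degree, dropping the vanishing first term -/
lemma delta_eq' {g A : Type*} [AddCommGroup A] (b : g → g → g) {n : ℕ}
    (c : (Fin n → g) → A) (x : Fin (n + 1) → g) :
    leibnizDelta b c x = ∑ j : Fin n, ∑ m : Fin n,
      if m.castSucc < j.succ then ((-1 : ℤ) ^ (j : ℕ)) • c (tup b x m j.succ) else 0 := by
  rw [delta_eq, Fin.sum_univ_succ]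
  simp [pow_succ]

/-- first block embedding -/
def e1 {a b n : ℕ} (h : a + b = n) (i : Fin a) : Fin n := ⟨i, by omega⟩
/-- second block embedding -/
def e2 {a b n : ℕ} (h : a + b = n) (i : Fin b) : Fin n := ⟨a + i, by omega⟩

/-- indices of the first factor -/
def E1 {a b n : ℕ} (h : a + b = n) (σ : Equiv.Perm (Fin n)) : Fin (a + 1) → Fin (n + 1) :=
  Fin.cons 0 (fun i => (σ (e1 h i)).succ)
/-- indices of the second factor -/
def E2 {a b n : ℕ} (h : a + b = n) (σ : Equiv.Perm (Fin n)) : Fin b → Fin (n + 1) :=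
  fun i => (σ (e2 h i)).succ

lemma shuffle_iff {a b : ℕ} (σ : Equiv.Perm (Fin (a + b))) :
    IsShuffle a b σ ↔ StrictMono (fun i => σ (e1 rfl i)) ∧ StrictMono (fun i => σ (e2 rfl i)) := by
  constructor
  · rintro ⟨h1, h2⟩
    refine ⟨fun i j hij => h1 _ _ hij j.2, fun i j hij => h2 _ _ ?_ ?_⟩
    · have : (i : ℕ) < j := hij
      simp only [e2]; omega
    · simp [e2]
  · rintro ⟨h1, h2⟩
    refine ⟨fun i j hij hj => ?_, fun i j hij hi => ?_⟩
    · exact @h1 ⟨i, by omega⟩ ⟨j, hj⟩ hij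
    · have := @h2 ⟨i - a, by omega⟩ ⟨j - a, by omega⟩ (by simp only [Fin.mk_lt_mk]; omega)
      have hi' : e2 rfl ⟨(i : ℕ) - a, by omega⟩ = i := Fin.ext (by simp only [e2]; omega)
      have hj' : e2 rfl ⟨(j : ℕ) - a, by omega⟩ = j := Fin.ext (by simp only [e2]; omega)
      simpa only [hi', hj'] using this

lemma cup_eq {g A : Type*} [CommRing A] {p q n : ℕ} (h : p + (q + 1) = n)
    (c : (Fin (p + 1) → g) → A) (d : (Fin (q + 1) → g) → A) (x : Fin (n + 1) → g)
    (h' : p + q + 2 = n + 1) :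
    cupProd c d (fun i => x (Fin.cast h' i)) = ∑ σ : Equiv.Perm (Fin n),
      if StrictMono (fun i => σ (e1 h i)) ∧ StrictMono (fun i => σ (e2 h i)) then
        ((Equiv.Perm.sign σ : ℤˣ) : ℤ) • (c (fun k => x (E1 h σ k)) * d (fun k => x (E2 h σ k)))
      else 0 := by
  subst h
  unfold cupProd
  refine Finset.sum_congr rfl fun σ _ => ?_
  simp only [shuffle_iff]
  congr 3
  congr 1
  funext k
  refine Fin.cases ?_ (fun k => ?_) k
  · simp [E1]
  · simp only [E1, Fin.cons_succ, Fin.val_succ, Nat.add_eq_zero_iff, one_ne_zero, and_false, dite_false]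
    congr 1


lemma succAbove_ext {n : ℕ} (i : Fin (n + 1)) (k : Fin n) (r : Fin (n + 1))
    (h : (k : ℕ) < i ∧ (r : ℕ) = k ∨ (i : ℕ) ≤ k ∧ (r : ℕ) = k + 1) : r = i.succAbove k := by
  rcases h with ⟨h1, h2⟩ | ⟨h1, h2⟩
  · rw [Fin.succAbove_of_castSucc_lt _ _ (by simpa [Fin.lt_def] using h1)]
    exact Fin.ext (by simpa using h2)
  · rw [Fin.succAbove_of_le_castSucc _ _ (by simpa [Fin.le_def] using h1)]
    exact Fin.ext (by simpa using h2)

lemma val_succAbove {n : ℕ} (i : Fin (n + 1)) (k : Fin n) :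
    (k : ℕ) < i ∧ (i.succAbove k : ℕ) = k ∨ (i : ℕ) ≤ k ∧ (i.succAbove k : ℕ) = k + 1 := by
  rcases lt_or_ge (k : ℕ) i with h | h
  · left
    rw [Fin.succAbove_of_castSucc_lt _ _ (by simpa [Fin.lt_def] using h)]
    exact ⟨h, rfl⟩
  · right
    rw [Fin.succAbove_of_le_castSucc _ _ (by simpa [Fin.le_def] using h)]
    exact ⟨h, by simp⟩

section blocks
variable {a b n : ℕ} (h : a + b = n)

lemma C11 (hC : (a + 1) + b = n + 1) (l : Fin (a + 1)) (m : Fin a) :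
    e1 hC (l.succAbove m) = (e1 hC l).succAbove (e1 h m) := by
  apply succAbove_ext
  have := val_succAbove l m
  simp only [e1]; omega

lemma C12 (hC : (a + 1) + b = n + 1) (l : Fin (a + 1)) (m : Fin b) :
    e2 hC m = (e1 hC l).succAbove (e2 h m) := by
  apply succAbove_ext
  have h1 := m.2
  have h2 := l.2
  simp only [e1, e2]; omega

lemma D22 (hD : a + (b + 1) = n + 1) (l : Fin (b + 1)) (m : Fin b) :
    e2 hD (l.succAbove m) = (e2 hD l).succAbove (e2 h m) := by
  apply succAbove_ext
  have := val_succAbove l m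
  have h1 := m.2
  have h2 := l.2
  simp only [e2]; omega

lemma D21 (hD : a + (b + 1) = n + 1) (l : Fin (b + 1)) (m : Fin a) :
    e1 hD m = (e2 hD l).succAbove (e1 h m) := by
  apply succAbove_ext
  have h1 := m.2
  left
  refine ⟨?_, rfl⟩
  simp only [e1, e2]; omega

lemma E1_inj (σ : Equiv.Perm (Fin n)) : Function.Injective (E1 h σ) := by
  unfold E1
  rw [Fin.cons_injective_iff]
  refine ⟨?_, ?_⟩
  · rintro ⟨i, hi⟩
    exact Fin.succ_ne_zero _ hi
  · intro i j hij
    have := σ.injective (Fin.succ_injective _ hij)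
    simp only [e1, Fin.mk.injEq] at this
    exact Fin.ext this

lemma E2_inj (σ : Equiv.Perm (Fin n)) : Function.Injective (E2 h σ) := by
  intro i j hij
  have := σ.injective (Fin.succ_injective _ hij)
  simp only [e2, Fin.mk.injEq] at this
  exact Fin.ext (by omega)

lemma E1_ne_E2 (σ : Equiv.Perm (Fin n)) (s : Fin (a + 1)) (t : Fin b) :
    E1 h σ s ≠ E2 h σ t := by
  refine Fin.cases ?_ (fun s => ?_) s
  · simp only [E1, E2, Fin.cons_zero]
    exact (Fin.succ_ne_zero _).symm
  · simp only [E1, E2, Fin.cons_succ]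
    intro hh
    have := σ.injective (Fin.succ_injective _ hh)
    simp only [e1, e2, Fin.mk.injEq] at this
    omega

lemma sum_E {M : Type*} [AddCommMonoid M] (σ : Equiv.Perm (Fin n)) (f : Fin (n + 1) → M) :
    ∑ m, f m = ∑ s, f (E1 h σ s) + ∑ t, f (E2 h σ t) := by
  subst h
  rw [Fin.sum_univ_succ, ← Equiv.sum_comp σ, Fin.sum_univ_add, ← add_assoc, Fin.sum_univ_succ (n := a)]
  rfl

lemma E1_strictMono (σ : Equiv.Perm (Fin n)) (hs : StrictMono (fun i => σ (e1 h i))) :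
    StrictMono (E1 h σ) := by
  intro x y
  refine Fin.cases ?_ (fun x => ?_) x <;> refine Fin.cases ?_ (fun y => ?_) y
  · simp
  · simp [E1]
  · simp
  · intro hxy
    simp only [E1, Fin.cons_succ, Fin.succ_lt_succ_iff] at *
    exact hs hxy

lemma E2_strictMono (σ : Equiv.Perm (Fin n)) (hs : StrictMono (fun i => σ (e2 h i))) :
    StrictMono (E2 h σ) := by
  intro x y hxy
  simp only [E2, Fin.succ_lt_succ_iff]
  exact hs hxy

-- C case
section C
variable (hC : (a + 1) + b = n + 1) (l : Fin (a + 1)) (j : Fin (n + 1)) (σ : Equiv.Perm (Fin n))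

lemma C_fun1 : (fun i => ins (e1 hC l) j σ (e1 hC i)) =
    l.insertNth (α := fun _ => Fin (n + 1)) j (fun k => j.succAbove (σ (e1 h k))) := by
  symm
  rw [Fin.insertNth_eq_iff]
  refine ⟨(ins_self _ _ _).symm, ?_⟩
  funext k
  simp only [Fin.removeNth]
  rw [C11 h, ins_succAbove]

lemma C_fun2 : (fun i => ins (e1 hC l) j σ (e2 hC i)) = fun k => j.succAbove (σ (e2 h k)) := by
  funext k
  rw [C12 h hC l, ins_succAbove]

lemma C_E2 (t : Fin b) : E2 hC (ins (e1 hC l) j σ) t = j.succ.succAbove (E2 h σ t) := by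
  simp only [E2, Fin.succ_succAbove_succ]
  rw [C12 h hC l, ins_succAbove]

lemma C_E1_self : E1 hC (ins (e1 hC l) j σ) l.succ = j.succ := by
  simp only [E1, Fin.cons_succ, ins_self]

lemma C_E1 (s : Fin (a + 1)) : E1 hC (ins (e1 hC l) j σ) (l.succ.succAbove s) =
    j.succ.succAbove (E1 h σ s) := by
  refine Fin.cases ?_ (fun s => ?_) s
  · simp [E1]
  · simp only [E1, Fin.succ_succAbove_succ, Fin.cons_succ]
    rw [C11 h, ins_succAbove]
end C

section D
variable (hD : a + (b + 1) = n + 1) (l : Fin (b + 1)) (j : Fin (n + 1)) (σ : Equiv.Perm (Fin n))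

lemma D_fun2 : (fun i => ins (e2 hD l) j σ (e2 hD i)) =
    l.insertNth (α := fun _ => Fin (n + 1)) j (fun k => j.succAbove (σ (e2 h k))) := by
  symm
  rw [Fin.insertNth_eq_iff]
  refine ⟨(ins_self _ _ _).symm, ?_⟩
  funext k
  simp only [Fin.removeNth]
  rw [D22 h, ins_succAbove]

lemma D_fun1 : (fun i => ins (e2 hD l) j σ (e1 hD i)) = fun k => j.succAbove (σ (e1 h k)) := by
  funext k
  rw [D21 h hD l, ins_succAbove]

lemma D_E1 (s : Fin (a + 1)) : E1 hD (ins (e2 hD l) j σ) s = j.succ.succAbove (E1 h σ s) := by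
  refine Fin.cases ?_ (fun s => ?_) s
  · simp [E1]
  · simp only [E1, Fin.succ_succAbove_succ, Fin.cons_succ]
    rw [D21 h hD l, ins_succAbove]

lemma D_E2_self : E2 hD (ins (e2 hD l) j σ) l = j.succ := by
  simp only [E2, ins_self]

lemma D_E2 (t : Fin b) : E2 hD (ins (e2 hD l) j σ) (l.succAbove t) =
    j.succ.succAbove (E2 h σ t) := by
  simp only [E2, Fin.succ_succAbove_succ]
  rw [D22 h, ins_succAbove]
end D

lemma strictMono_succAbove_comp {a n : ℕ} (j : Fin (n + 1)) (f : Fin a → Fin n) :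
    StrictMono (fun k => j.succAbove (f k)) ↔ StrictMono f := by
  constructor
  · intro hf x y hxy
    simpa [Fin.succAbove_lt_succAbove_iff] using hf hxy
  · exact fun hf => (Fin.strictMono_succAbove j).comp hf

/-- the common term -/
def W {g A : Type*} [CommRing A] (br : g → g → g) (c : (Fin (a + 1) → g) → A)
    (d : (Fin b → g) → A) (x : Fin (n + 2) → g) (j : Fin (n + 1)) (σ : Equiv.Perm (Fin n))
    (m : Fin (n + 1)) : A :=
  if m.castSucc < j.succ then
    ((-1 : ℤ) ^ (j : ℕ) * ((Equiv.Perm.sign σ : ℤˣ) : ℤ)) •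
      (c (fun k => tup br x m j.succ (E1 h σ k)) * d (fun k => tup br x m j.succ (E2 h σ k)))
  else 0

theorem rhs1 {g A : Type*} [CommRing A] (br : g → g → g) (c : (Fin (a + 1) → g) → A)
    (d : (Fin b → g) → A) (x : Fin (n + 2) → g) (hC : (a + 1) + b = n + 1) :
    (∑ τ : Equiv.Perm (Fin (n + 1)),
      if StrictMono (fun i => τ (e1 hC i)) ∧ StrictMono (fun i => τ (e2 hC i)) then
        ((Equiv.Perm.sign τ : ℤˣ) : ℤ) •
          (leibnizDelta br c (fun k => x (E1 hC τ k)) * d (fun k => x (E2 hC τ k)))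
      else 0) =
    ∑ j : Fin (n + 1), ∑ σ : Equiv.Perm (Fin n), ∑ s : Fin (a + 1),
      if StrictMono (fun i => σ (e1 h i)) ∧ StrictMono (fun i => σ (e2 h i)) then
        W h br c d x j σ (E1 h σ s) else 0 := by
  have step1 : ∀ τ : Equiv.Perm (Fin (n + 1)),
      (if StrictMono (fun i => τ (e1 hC i)) ∧ StrictMono (fun i => τ (e2 hC i)) then
        ((Equiv.Perm.sign τ : ℤˣ) : ℤ) •
          (leibnizDelta br c (fun k => x (E1 hC τ k)) * d (fun k => x (E2 hC τ k)))
      else 0) = ∑ l : Fin (a + 1), ∑ s : Fin (a + 1),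
        if StrictMono (fun i => τ (e1 hC i)) ∧ StrictMono (fun i => τ (e2 hC i)) then
          (if s.castSucc < l.succ then
            (((Equiv.Perm.sign τ : ℤˣ) : ℤ) * (-1) ^ (l : ℕ)) •
              (c (tup br (fun k => x (E1 hC τ k)) s l.succ) * d (fun k => x (E2 hC τ k)))
            else 0)
        else 0 := by
    intro τ
    split_ifs
    · rw [delta_eq']
      simp only [Finset.sum_mul, Finset.smul_sum]
      refine Finset.sum_congr rfl fun l _ => Finset.sum_congr rfl fun s _ => ?_
      split_ifs
      · rw [smul_mul_assoc, smul_smul]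
      · simp
    · simp
  simp only [step1]
  rw [Finset.sum_comm]
  have step2 : ∀ l : Fin (a + 1), (∑ τ : Equiv.Perm (Fin (n + 1)), ∑ s : Fin (a + 1),
        if StrictMono (fun i => τ (e1 hC i)) ∧ StrictMono (fun i => τ (e2 hC i)) then
          (if s.castSucc < l.succ then
            (((Equiv.Perm.sign τ : ℤˣ) : ℤ) * (-1) ^ (l : ℕ)) •
              (c (tup br (fun k => x (E1 hC τ k)) s l.succ) * d (fun k => x (E2 hC τ k)))
            else 0)
        else 0) = ∑ j : Fin (n + 1), ∑ σ : Equiv.Perm (Fin n), ∑ s : Fin (a + 1),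
          if StrictMono (l.insertNth (α := fun _ => Fin (n + 1)) j
            (fun k => j.succAbove (σ (e1 h k)))) then
            (if StrictMono (fun i => σ (e2 h i)) then W h br c d x j σ (E1 h σ s) else 0)
          else 0 := by
    intro l
    rw [sum_ins (e1 hC l)]
    refine Finset.sum_congr rfl fun j _ => Finset.sum_congr rfl fun σ _ =>
      Finset.sum_congr rfl fun s _ => ?_
    conv_rhs => rw [← ite_and]
    have hcond : (StrictMono (fun i => ins (e1 hC l) j σ (e1 hC i)) ∧
        StrictMono (fun i => ins (e1 hC l) j σ (e2 hC i))) ↔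
        (StrictMono (l.insertNth (α := fun _ => Fin (n + 1)) j
            (fun k => j.succAbove (σ (e1 h k)))) ∧ StrictMono (fun i => σ (e2 h i))) := by
      rw [C_fun1 h, C_fun2 h, strictMono_succAbove_comp]
    by_cases hc : (StrictMono (fun i => ins (e1 hC l) j σ (e1 hC i)) ∧
        StrictMono (fun i => ins (e1 hC l) j σ (e2 hC i)))
    · rw [if_pos hc, if_pos (hcond.1 hc)]
      have hlt : s.castSucc < l.succ ↔ (E1 h σ s).castSucc < j.succ := by
        rw [← Fin.succAbove_lt_iff_castSucc_lt, ← (E1_strictMono hC _ hc.1).lt_iff_lt,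
          C_E1 h, C_E1_self, Fin.succAbove_lt_iff_castSucc_lt]
      unfold W
      rw [if_congr hlt rfl rfl]
      split_ifs
      · congr 1
        · rw [sign_ins]
          simp only [e1]
          have : ((-1 : ℤ) ^ (l : ℕ)) * (-1) ^ (l : ℕ) = 1 := by
            rw [← mul_pow]; simp
          rw [pow_add]
          linear_combination ((-1 : ℤ) ^ (j : ℕ) * ((Equiv.Perm.sign σ : ℤˣ) : ℤ)) * this
        · congr 2
          · funext k
            simp only [tup, C_E1 h, C_E1_self, (E1_inj h σ).eq_iff]
          · funext k
            simp only [tup, C_E2 h, (E1_ne_E2 h σ s k).symm, if_false]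
      · rfl
    · rw [if_neg hc, if_neg (fun hh => hc (hcond.2 hh))]
  simp only [step2]
  rw [Finset.sum_comm]
  refine Finset.sum_congr rfl fun j _ => ?_
  rw [Finset.sum_comm]
  refine Finset.sum_congr rfl fun σ _ => ?_
  rw [Finset.sum_comm]
  refine Finset.sum_congr rfl fun s _ => ?_
  rw [sum_insertNth, ite_and]

theorem rhs2 {g A : Type*} [CommRing A] (br : g → g → g) (c : (Fin (a + 1) → g) → A)
    (d : (Fin b → g) → A) (x : Fin (n + 2) → g) (hD : a + (b + 1) = n + 1) :
    ((-1 : ℤ) ^ (a + 1)) • (∑ τ : Equiv.Perm (Fin (n + 1)),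
      if StrictMono (fun i => τ (e1 hD i)) ∧ StrictMono (fun i => τ (e2 hD i)) then
        ((Equiv.Perm.sign τ : ℤˣ) : ℤ) •
          (c (fun k => x (E1 hD τ k)) * leibnizDelta br d (fun k => x (E2 hD τ k)))
      else 0) =
    ∑ j : Fin (n + 1), ∑ σ : Equiv.Perm (Fin n), ∑ t : Fin b,
      if StrictMono (fun i => σ (e1 h i)) ∧ StrictMono (fun i => σ (e2 h i)) then
        W h br c d x j σ (E2 h σ t) else 0 := by
  have step1 : ∀ τ : Equiv.Perm (Fin (n + 1)),
      ((-1 : ℤ) ^ (a + 1)) •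
      (if StrictMono (fun i => τ (e1 hD i)) ∧ StrictMono (fun i => τ (e2 hD i)) then
        ((Equiv.Perm.sign τ : ℤˣ) : ℤ) •
          (c (fun k => x (E1 hD τ k)) * leibnizDelta br d (fun k => x (E2 hD τ k)))
      else 0) = ∑ l : Fin (b + 1), ∑ t : Fin b,
        if StrictMono (fun i => τ (e1 hD i)) ∧ StrictMono (fun i => τ (e2 hD i)) then
          (if t.castSucc < l then
            ((-1) ^ (a + 1) * (((Equiv.Perm.sign τ : ℤˣ) : ℤ) * (-1) ^ ((l : ℕ) + 1))) •
              (c (fun k => x (E1 hD τ k)) * d (tup br (fun k => x (E2 hD τ k)) t l))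
            else 0)
        else 0 := by
    intro τ
    split_ifs
    · rw [delta_eq]
      simp only [Finset.mul_sum, Finset.smul_sum]
      refine Finset.sum_congr rfl fun l _ => Finset.sum_congr rfl fun s _ => ?_
      split_ifs
      · rw [mul_smul_comm, smul_smul, smul_smul, mul_assoc]
      · simp
    · simp
  rw [Finset.smul_sum]
  simp only [step1]
  rw [Finset.sum_comm]
  have step2 : ∀ l : Fin (b + 1), (∑ τ : Equiv.Perm (Fin (n + 1)), ∑ t : Fin b,
        if StrictMono (fun i => τ (e1 hD i)) ∧ StrictMono (fun i => τ (e2 hD i)) then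
          (if t.castSucc < l then
            ((-1) ^ (a + 1) * (((Equiv.Perm.sign τ : ℤˣ) : ℤ) * (-1) ^ ((l : ℕ) + 1))) •
              (c (fun k => x (E1 hD τ k)) * d (tup br (fun k => x (E2 hD τ k)) t l))
            else 0)
        else 0) = ∑ j : Fin (n + 1), ∑ σ : Equiv.Perm (Fin n), ∑ t : Fin b,
          if StrictMono (l.insertNth (α := fun _ => Fin (n + 1)) j
            (fun k => j.succAbove (σ (e2 h k)))) then
            (if StrictMono (fun i => σ (e1 h i)) then W h br c d x j σ (E2 h σ t) else 0)
          else 0 := by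
    intro l
    rw [sum_ins (e2 hD l)]
    refine Finset.sum_congr rfl fun j _ => Finset.sum_congr rfl fun σ _ =>
      Finset.sum_congr rfl fun t _ => ?_
    conv_rhs => rw [← ite_and]
    have hcond : (StrictMono (fun i => ins (e2 hD l) j σ (e1 hD i)) ∧
        StrictMono (fun i => ins (e2 hD l) j σ (e2 hD i))) ↔
        (StrictMono (l.insertNth (α := fun _ => Fin (n + 1)) j
            (fun k => j.succAbove (σ (e2 h k)))) ∧ StrictMono (fun i => σ (e1 h i))) := by
      rw [D_fun1 h, D_fun2 h, strictMono_succAbove_comp, and_comm]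
    by_cases hc : (StrictMono (fun i => ins (e2 hD l) j σ (e1 hD i)) ∧
        StrictMono (fun i => ins (e2 hD l) j σ (e2 hD i)))
    · rw [if_pos hc, if_pos (hcond.1 hc)]
      have hlt : t.castSucc < l ↔ (E2 h σ t).castSucc < j.succ := by
        rw [← Fin.succAbove_lt_iff_castSucc_lt, ← (E2_strictMono hD _ hc.2).lt_iff_lt,
          D_E2 h, D_E2_self, Fin.succAbove_lt_iff_castSucc_lt]
      unfold W
      rw [if_congr hlt rfl rfl]
      split_ifs
      · congr 1
        · rw [sign_ins]
          simp only [e2]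
          have h1 : ((-1 : ℤ) ^ (l : ℕ)) * (-1) ^ (l : ℕ) = 1 := by
            rw [← mul_pow]; simp
          have h2 : ((-1 : ℤ) ^ a) * (-1) ^ a = 1 := by
            rw [← mul_pow]; simp
          simp only [pow_add, pow_one]
          calc _ = (((-1 : ℤ) ^ a) * (-1) ^ a) * (((-1 : ℤ) ^ (l : ℕ)) * (-1) ^ (l : ℕ)) *
                ((-1 : ℤ) ^ (j : ℕ) * ((Equiv.Perm.sign σ : ℤˣ) : ℤ)) := by ring
            _ = _ := by rw [h1, h2]; ring
        · congr 2
          · funext k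
            simp only [tup, D_E1 h, E1_ne_E2 h σ k t, if_false]
          · funext k
            simp only [tup, D_E2 h, D_E2_self, (E2_inj h σ).eq_iff]
      · rfl
    · rw [if_neg hc, if_neg (fun hh => hc (hcond.2 hh))]
  simp only [step2]
  rw [Finset.sum_comm]
  refine Finset.sum_congr rfl fun j _ => ?_
  rw [Finset.sum_comm]
  refine Finset.sum_congr rfl fun σ _ => ?_
  rw [Finset.sum_comm]
  refine Finset.sum_congr rfl fun s _ => ?_
  rw [sum_insertNth, ← ite_and, if_congr and_comm rfl rfl]

end blocks

theorem main {g A : Type*} [CommRing A] (br : g → g → g) {p q : ℕ}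
    (c : (Fin (p + 1) → g) → A) (d : (Fin (q + 1) → g) → A) (x : Fin (p + q + 3) → g)
    (u1 : p + 1 + q + 2 = p + q + 3) (u2 : p + (q + 1) + 2 = p + q + 3) :
    leibnizDelta br (cupProd c d) x =
        cupProd (p := p + 1) (q := q) (leibnizDelta br c) d
            (fun i : Fin (p + 1 + q + 2) => x (Fin.cast u1 i)) +
          ((-1 : ℤ) ^ (p + 1)) •
            cupProd (p := p) (q := q + 1) c (leibnizDelta br d)
              (fun i : Fin (p + (q + 1) + 2) => x (Fin.cast u2 i)) := by
  have h : p + (q + 1) = p + q + 1 := rfl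
  rw [cup_eq (n := p + q + 2) (by omega) _ _ x, cup_eq (n := p + q + 2) (by omega) _ _ x,
    rhs1 h, rhs2 h, delta_eq', ← Finset.sum_add_distrib]
  refine Finset.sum_congr rfl fun j _ => ?_
  have key : ∀ m : Fin (p + q + 2),
      (if m.castSucc < j.succ then ((-1 : ℤ) ^ (j : ℕ)) • cupProd c d (tup br x m j.succ) else 0) =
      ∑ σ : Equiv.Perm (Fin (p + q + 1)),
        if StrictMono (fun i => σ (e1 h i)) ∧ StrictMono (fun i => σ (e2 h i)) then
          W h br c d x j σ m else 0 := by
    intro m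
    have := cup_eq h c d (tup br x m j.succ) rfl
    simp only [Fin.cast_refl, id] at this
    rw [this]
    unfold W
    split_ifs with hm
    · rw [Finset.smul_sum]
      refine Finset.sum_congr rfl fun σ _ => ?_
      split_ifs
      · rw [smul_smul]
      · simp
    · simp
  simp only [key]
  rw [Finset.sum_comm, ← Finset.sum_add_distrib]
  refine Finset.sum_congr rfl fun σ _ => ?_
  rw [sum_E h σ]

end LeibAux

/-- For a Leibniz algebra `g` over a field `K` and a commutative associative `K`-algebra
`A`, the Leibniz coboundary `δ` is a graded derivation with respect to the shuffle cup
product: `δ(c∪d) = (δc)∪d + (-1)^{p'} c∪(δd)`, where `p' = p + 1` is the degree of the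
cochain `c : g^{p+1} → A`. -/
theorem leibniz_delta_cupProd
    {K : Type*} [Field K] {g : Type*} [AddCommGroup g] [Module K g]
    {A : Type*} [CommRing A] [Algebra K A]
    (b : g →ₗ[K] g →ₗ[K] g)
    (hleib : ∀ x y z : g, b x (b y z) = b (b x y) z - b (b x z) y)
    {p q : ℕ}
    (c : MultilinearMap K (fun _ : Fin (p + 1) => g) A)
    (d : MultilinearMap K (fun _ : Fin (q + 1) => g) A) :
    ∀ x : Fin (p + q + 3) → g,
      leibnizDelta (fun u v => b u v) (cupProd ⇑c ⇑d) x =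
        cupProd (p := p + 1) (q := q) (leibnizDelta (fun u v => b u v) ⇑c) ⇑d
            (fun i : Fin (p + 1 + q + 2) => x (Fin.cast (by omega) i)) +
          ((-1 : ℤ) ^ (p + 1)) •
            cupProd (p := p) (q := q + 1) ⇑c (leibnizDelta (fun u v => b u v) ⇑d)
              (fun i : Fin (p + (q + 1) + 2) => x (Fin.cast (by omega) i)) := by
  exact fun x => LeibAux.main (fun u v => b u v) c d x _ _
end

section
/- Let g be a Leibniz algebra over a field K and A a commutative associative K-algebra. For multilinear cochains a : gᵖ → A, b : g^q → A, and c : gʳ → A, the shuffle cup product satisfies the zinbiel relation at the cochain level: (a∪b)∪c = a∪(b∪c) + (-1)^{qr} a∪(c∪b). -/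
open scoped Classical

def IncOn {n : ℕ} (σ : Equiv.Perm (Fin n)) (lo hi : ℕ) : Prop :=
  ∀ i j : Fin n, lo ≤ (i : ℕ) → (i : ℕ) < (j : ℕ) → (j : ℕ) < hi → σ i < σ j

/-- the offset embedding -/
def offE {k m N : ℕ} (h : k + m ≤ N) : Fin m ↪ Fin N :=
  ⟨fun i => ⟨k + i, by omega⟩, fun i j hij => by
    simp only [Fin.mk.injEq] at hij
    exact Fin.ext (by omega)⟩

/-- block embedding of a permutation -/
noncomputable def via {k m N : ℕ} (h : k + m ≤ N) (ρ : Equiv.Perm (Fin m)) : Equiv.Perm (Fin N) :=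
  ρ.viaFintypeEmbedding (offE h)

lemma offE_val {k m N : ℕ} (h : k + m ≤ N) (i : Fin m) : (offE h i : ℕ) = k + i := rfl

lemma via_in {k m N : ℕ} (h : k + m ≤ N) (ρ : Equiv.Perm (Fin m)) (t : ℕ) (ht : t < m) :
    via h ρ ⟨k + t, by omega⟩ = ⟨k + (ρ ⟨t, ht⟩ : ℕ), by omega⟩ :=
  Equiv.Perm.viaFintypeEmbedding_apply_image ρ (offE h) ⟨t, ht⟩

lemma via_out {k m N : ℕ} (h : k + m ≤ N) (ρ : Equiv.Perm (Fin m)) (i : Fin N)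
    (hi : (i : ℕ) < k ∨ k + m ≤ (i : ℕ)) : via h ρ i = i := by
  apply Equiv.Perm.viaFintypeEmbedding_apply_notMem_range
  rintro ⟨j, rfl⟩
  rw [offE_val] at hi
  omega

lemma sign_via {k m N : ℕ} (h : k + m ≤ N) (ρ : Equiv.Perm (Fin m)) :
    Equiv.Perm.sign (via h ρ) = Equiv.Perm.sign ρ :=
  Equiv.Perm.viaFintypeEmbedding_sign ρ (offE h)

lemma incOn_lt_iff {n lo hi : ℕ} {σ : Equiv.Perm (Fin n)} (hσ : IncOn σ lo hi) (i j : Fin n)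
    (hi1 : lo ≤ (i : ℕ)) (hi2 : (i : ℕ) < hi) (hj1 : lo ≤ (j : ℕ)) (hj2 : (j : ℕ) < hi) :
    σ i < σ j ↔ i < j := by
  constructor
  · intro hlt
    by_contra hn
    rcases (not_lt.mp hn).lt_or_eq with h' | h'
    · exact absurd (hσ j i hj1 h' hi2) (not_lt.mpr hlt.le)
    · subst h'; exact lt_irrefl _ hlt
  · intro hlt
    exact hσ i j hi1 hlt hj2

/-- comparison inside the block -/
lemma via_lt_iff {k m N : ℕ} (h : k + m ≤ N) {σ : Equiv.Perm (Fin N)} (hσ : IncOn σ k (k + m))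
    (ρ : Equiv.Perm (Fin m)) (s t : ℕ) (hs : s < m) (ht : t < m) :
    (σ * via h ρ) ⟨k + s, by omega⟩ < (σ * via h ρ) ⟨k + t, by omega⟩ ↔
      ρ ⟨s, hs⟩ < ρ ⟨t, ht⟩ := by
  rw [Equiv.Perm.mul_apply, Equiv.Perm.mul_apply, via_in h ρ s hs, via_in h ρ t ht,
    incOn_lt_iff hσ _ _ (by simp) (by simp) (by simp) (by simp), Fin.lt_def, Fin.lt_def]
  simp

lemma perm_eq_of_lt_iff {m : ℕ} (ρ ρ' : Equiv.Perm (Fin m))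
    (h : ∀ i j, ρ i < ρ j ↔ ρ' i < ρ' j) : ρ = ρ' := by
  have hm : StrictMono (ρ' * ρ⁻¹ : Equiv.Perm (Fin m)) := by
    intro i j hij
    simp only [Equiv.Perm.mul_apply]
    rw [← h]
    simpa using hij
  have h1 : (hm.orderIsoOfSurjective _ (ρ' * ρ⁻¹ : Equiv.Perm (Fin m)).surjective)
      = OrderIso.refl _ := Subsingleton.elim _ _
  ext i
  have h2 := congrArg (fun f : Fin m ≃o Fin m => f (ρ i)) h1
  simp at h2
  rw [h2]

lemma via_unique {k m N : ℕ} (h : k + m ≤ N) {σ σ' : Equiv.Perm (Fin N)}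
    (hσ : IncOn σ k (k + m)) (hσ' : IncOn σ' k (k + m)) (ρ ρ' : Equiv.Perm (Fin m))
    (he : σ * via h ρ = σ' * via h ρ') : σ = σ' ∧ ρ = ρ' := by
  have hr : ρ = ρ' := by
    apply perm_eq_of_lt_iff
    intro i j
    rw [← via_lt_iff h hσ ρ i j i.2 j.2, ← via_lt_iff h hσ' ρ' i j i.2 j.2, he]
  subst hr
  exact ⟨mul_right_cancel he, rfl⟩

lemma via_exists {k m N : ℕ} (h : k + m ≤ N) (τ : Equiv.Perm (Fin N)) :
    ∃ (σ : Equiv.Perm (Fin N)) (ρ : Equiv.Perm (Fin m)),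
      IncOn σ k (k + m) ∧ σ * via h ρ = τ := by
  set f : Fin m → Fin N := fun i => τ (offE h i) with hf
  have hfi : Function.Injective f := τ.injective.comp (offE h).injective
  have hmono : StrictMono (f ∘ Tuple.sort f) :=
    (Tuple.monotone_sort f).strictMono_of_injective (hfi.comp (Tuple.sort f).injective)
  have key : ∀ j : Fin m, (τ * (via h (Tuple.sort f)⁻¹)⁻¹) (offE h j) = (f ∘ Tuple.sort f) j := by
    intro j
    rw [Equiv.Perm.mul_apply]
    simp only [hf, Function.comp]
    congr 1
    rw [Equiv.Perm.inv_eq_iff_eq]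
    have := via_in h (Tuple.sort f)⁻¹ (Tuple.sort f j) (Tuple.sort f j).2
    refine Eq.trans ?_ this.symm
    apply Fin.ext
    rw [offE_val]
    simp [hf]
  refine ⟨τ * (via h (Tuple.sort f)⁻¹)⁻¹, (Tuple.sort f)⁻¹, ?_, by simp⟩
  intro i j hi hij hj
  have hi' : i = offE h ⟨i - k, by omega⟩ := by
    apply Fin.ext; rw [offE_val]; simp only; omega
  have hj' : j = offE h ⟨j - k, by omega⟩ := by
    apply Fin.ext; rw [offE_val]; simp only; omega
  have hlt : (⟨i - k, by omega⟩ : Fin m) < ⟨j - k, by omega⟩ := by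
    rw [Fin.lt_def]
    simp only
    omega
  have := hmono hlt
  rw [← key, ← key, ← hi', ← hj'] at this
  exact this

lemma sum_comp {A : Type*} [AddCommMonoid A] {k m N : ℕ} (h : k + m ≤ N)
    (P R : Equiv.Perm (Fin N) → Prop) (Q : Equiv.Perm (Fin m) → Prop)
    [DecidablePred P] [DecidablePred R] [DecidablePred Q]
    (hP : ∀ σ, P σ → IncOn σ k (k + m))
    (hR : ∀ σ ρ, IncOn σ k (k + m) → (R (σ * via h ρ) ↔ P σ ∧ Q ρ))
    (F : Equiv.Perm (Fin N) → A) :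
    (∑ σ, if P σ then (∑ ρ, if Q ρ then F (σ * via h ρ) else 0) else 0) =
      ∑ τ, if R τ then F τ else 0 := by
  rw [← Finset.sum_filter, ← Finset.sum_filter]
  simp_rw [← Finset.sum_filter]
  rw [← Finset.sum_product']
  refine Finset.sum_bij (fun x _ => x.1 * via h x.2) ?_ ?_ ?_ ?_
  · rintro ⟨σ, ρ⟩ hx
    simp only [Finset.mem_product, Finset.mem_filter, Finset.mem_univ, true_and] at hx ⊢
    exact (hR σ ρ (hP σ hx.1)).2 hx
  · rintro ⟨σ, ρ⟩ hx ⟨σ', ρ'⟩ hx' he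
    simp only [Finset.mem_product, Finset.mem_filter, Finset.mem_univ, true_and] at hx hx'
    have := via_unique h (hP σ hx.1) (hP σ' hx'.1) ρ ρ' he
    rw [this.1, this.2]
  · intro τ hτ
    simp only [Finset.mem_filter, Finset.mem_univ, true_and] at hτ
    obtain ⟨σ, ρ, hi, rfl⟩ := via_exists h τ
    refine ⟨(σ, ρ), ?_, rfl⟩
    simpa using (hR σ ρ hi).1 hτ
  · intros; rfl

lemma cupProd_eq {g A : Type*} [CommRing A] {p q n : ℕ} (hn : p + (q + 1) = n)
    (c : (Fin (p + 1) → g) → A) (d : (Fin (q + 1) → g) → A) (x : Fin (p + q + 2) → g) :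
    cupProd c d x = ∑ σ : Equiv.Perm (Fin n),
    if IncOn σ 0 p ∧ IncOn σ p n then
      ((Equiv.Perm.sign σ : ℤˣ) : ℤ) •
        (c (fun i => if h : (i : ℕ) = 0 then x ⟨0, by omega⟩
              else x ⟨(σ ⟨(i : ℕ) - 1, by omega⟩ : ℕ) + 1, by omega⟩) *
         d (fun j => x ⟨(σ ⟨p + (j : ℕ), by omega⟩ : ℕ) + 1, by omega⟩))
    else 0 := by
  subst hn
  unfold cupProd
  refine Finset.sum_congr rfl fun σ _ => ?_
  have : IsShuffle p (q + 1) σ ↔ IncOn σ 0 p ∧ IncOn σ p (p + (q + 1)) := by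
    unfold IsShuffle IncOn
    constructor
    · rintro ⟨h1, h2⟩
      exact ⟨fun i j _ hij hj => h1 i j hij hj, fun i j hi hij _ => h2 i j hij hi⟩
    · rintro ⟨h1, h2⟩
      exact ⟨fun i j hij hj => h1 i j (Nat.zero_le _) hij hj, fun i j hij hi => h2 i j hi hij j.2⟩
  simp only [this]

/-- the triple term -/
noncomputable def triTerm {g A : Type*} [CommRing A] {p q r N : ℕ} (hN : p + q + r + 2 = N)
    (a : (Fin (p + 1) → g) → A) (b : (Fin (q + 1) → g) → A) (c : (Fin (r + 1) → g) → A)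
    (x : Fin (p + q + r + 3) → g) (τ : Equiv.Perm (Fin N)) : A :=
  ((Equiv.Perm.sign τ : ℤˣ) : ℤ) •
    (a (fun i => if h : (i : ℕ) = 0 then x ⟨0, by omega⟩
        else x ⟨(τ ⟨(i : ℕ) - 1, by omega⟩ : ℕ) + 1, by omega⟩) *
      b (fun j => x ⟨(τ ⟨p + (j : ℕ), by omega⟩ : ℕ) + 1, by omega⟩) *
      c (fun j => x ⟨(τ ⟨p + q + 1 + (j : ℕ), by omega⟩ : ℕ) + 1, by omega⟩))

lemma lhs_eq {g A : Type*} [CommRing A] {p q r N : ℕ} (hN : p + q + r + 2 = N)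
    (a : (Fin (p + 1) → g) → A) (b : (Fin (q + 1) → g) → A) (c : (Fin (r + 1) → g) → A)
    (x : Fin (p + q + r + 3) → g) :
    cupProd (p := p + q + 1) (q := r) (cupProd a b) c
          (fun i : Fin (p + q + 1 + r + 2) => x (Fin.cast (by omega) i)) =
      ∑ τ : Equiv.Perm (Fin N),
        if IncOn τ 0 p ∧ IncOn τ p (p + q + 1) ∧ IncOn τ (p + q + 1) N then
          triTerm hN a b c x τ else 0 := by
  have h : 0 + (p + q + 1) ≤ N := by omega
  rw [cupProd_eq (n := N) (by omega)]
  refine Eq.trans ?_ (sum_comp h (fun σ => IncOn σ 0 (p + q + 1) ∧ IncOn σ (p + q + 1) N)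
    (fun τ => IncOn τ 0 p ∧ IncOn τ p (p + q + 1) ∧ IncOn τ (p + q + 1) N)
    (fun ρ => IncOn ρ 0 p ∧ IncOn ρ p (p + q + 1)) ?_ ?_ (triTerm hN a b c x))
  · refine Finset.sum_congr rfl fun σ _ => ?_
    split_ifs with hσ
    swap; · rfl
    rw [cupProd_eq (n := p + q + 1) (by omega), Finset.sum_mul, Finset.smul_sum]
    refine Finset.sum_congr rfl fun ρ _ => ?_
    by_cases hρ : IncOn ρ 0 p ∧ IncOn ρ p (p + q + 1)
    swap
    · rw [if_neg hρ, if_neg hρ, zero_mul, smul_zero]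
    rw [if_pos hρ, if_pos hρ]
    have e1 : ∀ (t : ℕ) (ht : t < p + q + 1), (σ * via h ρ) ⟨t, by omega⟩ =
        σ ⟨ρ ⟨t, ht⟩, by omega⟩ := by
      intro t ht
      have := via_in h ρ t ht
      simp only [Nat.zero_add] at this
      rw [Equiv.Perm.mul_apply, this]
    have e2 : ∀ (t : ℕ) (ht : t < N), p + q + 1 ≤ t → (σ * via h ρ) ⟨t, ht⟩ = σ ⟨t, ht⟩ := by
      intro t ht hpt
      rw [Equiv.Perm.mul_apply, via_out h ρ]
      right; simpa using hpt
    unfold triTerm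
    rw [Equiv.Perm.sign_mul, sign_via, smul_mul_assoc, smul_smul, ← Units.val_mul]
    congr 1
    congr 1
    · congr 1
      · congr 1
        funext i
        by_cases hi : (i : ℕ) = 0
        · simp [hi]
        · simp only [hi, dif_neg, not_false_eq_true]
          rw [dif_neg (by omega)]
          exact congrArg x (Fin.ext (congrArg (fun z : Fin N => (z : ℕ) + 1) (e1 (i - 1) (by omega)).symm))
      · congr 1
        funext j
        rw [dif_neg (by simp)]
        exact congrArg x (Fin.ext (congrArg (fun z : Fin N => (z : ℕ) + 1) (e1 (p + j) (by omega)).symm))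
    · congr 1
      funext j
      exact congrArg x (Fin.ext (congrArg (fun z : Fin N => (z : ℕ) + 1) (e2 (p + q + 1 + j) (by omega) (by omega)).symm))
  · intro σ hσ
    simpa using hσ.1
  · intro σ ρ hσ
    have hout : ∀ i : Fin N, p + q + 1 ≤ (i : ℕ) → (σ * via h ρ) i = σ i := by
      intro i hi
      rw [Equiv.Perm.mul_apply, via_out h ρ]
      right; simpa using hi
    have hin : ∀ (i j : Fin N) (hi : (i : ℕ) < p + q + 1) (hj : (j : ℕ) < p + q + 1),
        (σ * via h ρ) i < (σ * via h ρ) j ↔ ρ ⟨i, hi⟩ < ρ ⟨j, hj⟩ := by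
      intro i j hi hj
      rw [← via_lt_iff h hσ ρ i j hi hj]
      simp
    constructor
    · rintro ⟨h1, h2, h3⟩
      refine ⟨⟨by simpa using hσ, ?_⟩, ?_, ?_⟩
      · intro i j hi hij hj
        rw [← hout i hi, ← hout j (by omega)]
        exact h3 i j hi hij hj
      · intro i j hi hij hj
        exact (hin ⟨i, by omega⟩ ⟨j, by omega⟩ i.2 j.2).1 (h1 _ _ hi hij hj)
      · intro i j hi hij hj
        exact (hin ⟨i, by omega⟩ ⟨j, by omega⟩ i.2 j.2).1 (h2 _ _ hi hij hj)
    · rintro ⟨⟨h1, h2⟩, h3, h4⟩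
      refine ⟨?_, ?_, ?_⟩
      · intro i j hi hij hj
        exact (hin i j (by omega) (by omega)).2 (h3 _ _ hi hij hj)
      · intro i j hi hij hj
        exact (hin i j (by omega) (by omega)).2 (h4 _ _ hi hij hj)
      · intro i j hi hij hj
        rw [hout i hi, hout j (by omega)]
        exact h2 i j hi hij hj

lemma rhs_eq {g A : Type*} [CommRing A] {p q r N : ℕ} (hN : p + q + r + 2 = N)
    (a : (Fin (p + 1) → g) → A) (b : (Fin (q + 1) → g) → A) (c : (Fin (r + 1) → g) → A)
    (x : Fin (p + q + r + 3) → g) :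
    cupProd (p := p) (q := q + r + 1) a (cupProd b c)
          (fun i : Fin (p + (q + r + 1) + 2) => x (Fin.cast (by omega) i)) =
      ∑ τ : Equiv.Perm (Fin N),
        if (IncOn τ 0 p ∧ IncOn τ p (p + q + 1) ∧ IncOn τ (p + q + 1) N) ∧
            τ ⟨p, by omega⟩ < τ ⟨p + q + 1, by omega⟩ then
          triTerm hN a b c x τ else 0 := by
  have h : (p + 1) + (q + r + 1) ≤ N := by omega
  rw [cupProd_eq (n := N) (by omega)]
  refine Eq.trans ?_ (sum_comp h (fun σ => IncOn σ 0 p ∧ IncOn σ p N)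
    (fun τ => (IncOn τ 0 p ∧ IncOn τ p (p + q + 1) ∧ IncOn τ (p + q + 1) N) ∧
            τ ⟨p, by omega⟩ < τ ⟨p + q + 1, by omega⟩)
    (fun ρ => IncOn ρ 0 q ∧ IncOn ρ q (q + r + 1)) ?_ ?_ (triTerm hN a b c x))
  · refine Finset.sum_congr rfl fun σ _ => ?_
    split_ifs with hσ
    swap; · rfl
    rw [cupProd_eq (n := q + r + 1) (by omega), Finset.mul_sum, Finset.smul_sum]
    refine Finset.sum_congr rfl fun ρ _ => ?_
    split_ifs with hρ
    swap; · simp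
    have e1 : ∀ (t s : ℕ) (ht : t < q + r + 1) (hs : s < N), s = p + 1 + t →
        (σ * via h ρ) ⟨s, hs⟩ = σ ⟨p + (ρ ⟨t, ht⟩ + 1), by omega⟩ := by
      intro t s ht hs hst
      subst hst
      have := via_in h ρ t ht
      rw [Equiv.Perm.mul_apply, this]
      congr 2
      omega
    have e2 : ∀ (t : ℕ) (ht : t < N), t < p + 1 → (σ * via h ρ) ⟨t, ht⟩ = σ ⟨t, ht⟩ := by
      intro t ht hpt
      rw [Equiv.Perm.mul_apply, via_out h ρ]
      left; simpa using hpt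
    unfold triTerm
    rw [Equiv.Perm.sign_mul, sign_via, mul_smul_comm, smul_smul, ← Units.val_mul, mul_assoc]
    congr 1
    congr 1
    · congr 1
      funext i
      by_cases hi : (i : ℕ) = 0
      · simp [hi]
      · simp only [hi, dif_neg, not_false_eq_true]
        exact congrArg x (Fin.ext (congrArg (fun z : Fin N => (z : ℕ) + 1) (e2 (i - 1) (by omega) (by omega)).symm))
    · congr 1
      · congr 1
        funext i
        by_cases hi : (i : ℕ) = 0
        · rw [dif_pos hi]
          have hi0 : (⟨p + (i : ℕ), by omega⟩ : Fin N) = ⟨p + 0, by omega⟩ := Fin.ext (by simp [hi])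
          have e3 := e2 (p + i) (by omega) (by omega)
          rw [hi0] at e3
          have e4 : (σ ⟨p + 0, by omega⟩ : Fin N) = (σ * via h ρ) ⟨p + (i : ℕ), by omega⟩ := by
            rw [hi0]; exact e3.symm
          exact congrArg x (Fin.ext (congrArg (fun z : Fin N => (z : ℕ) + 1) (e4)))
        · simp only [hi, dif_neg, not_false_eq_true]
          exact congrArg x (Fin.ext (congrArg (fun z : Fin N => (z : ℕ) + 1) (e1 (i - 1) (p + i) (by omega) (by omega) (by omega)).symm))
      · congr 1
        funext j
        exact congrArg x (Fin.ext (congrArg (fun z : Fin N => (z : ℕ) + 1) (e1 (q + j) (p + q + 1 + j) (by omega) (by omega) (by omega)).symm))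
  · intro σ hσ i j hi hij hj
    exact hσ.2 i j (by omega) hij (by omega)
  · intro σ ρ hσ
    have hout : ∀ i : Fin N, (i : ℕ) < p + 1 → (σ * via h ρ) i = σ i := by
      intro i hi
      rw [Equiv.Perm.mul_apply, via_out h ρ]
      left; simpa using hi
    have hin : ∀ (i j : Fin N) (s t : ℕ) (hs : s < q + r + 1) (ht : t < q + r + 1),
        (i : ℕ) = p + 1 + s → (j : ℕ) = p + 1 + t →
        ((σ * via h ρ) i < (σ * via h ρ) j ↔ ρ ⟨s, hs⟩ < ρ ⟨t, ht⟩) := by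
      intro i j s t hs ht hi hj
      rw [← via_lt_iff h hσ ρ s t hs ht]
      have hi' : i = ⟨p + 1 + s, by omega⟩ := Fin.ext hi
      have hj' : j = ⟨p + 1 + t, by omega⟩ := Fin.ext hj
      rw [hi', hj']
    constructor
    · rintro ⟨⟨h1, h2, h3⟩, h4⟩
      have hmin : ∀ j : Fin N, p < (j : ℕ) →
          (σ * via h ρ) ⟨p, by omega⟩ < (σ * via h ρ) j := by
        intro j hj
        by_cases hjq : (j : ℕ) < p + q + 1
        · exact h2 _ _ (le_refl _) hj hjq
        · by_cases hje : (j : ℕ) = p + q + 1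
          · have : j = ⟨p + q + 1, by omega⟩ := Fin.ext hje
            rw [this]; exact h4
          · exact h4.trans (h3 _ _ (le_refl _) (by simp only; omega) j.2)
      refine ⟨⟨?_, ?_⟩, ?_, ?_⟩
      · intro i j hi hij hj
        rw [← hout i (by omega), ← hout j (by omega)]
        exact h1 i j hi hij hj
      · intro i j hi hij hj
        by_cases hip : (i : ℕ) = p
        · obtain ⟨j', hj'⟩ := (via h ρ).surjective j
          have hpj : p < (j' : ℕ) := by
            by_contra hcon
            rw [via_out h ρ j' (by omega)] at hj'
            subst hj'
            omega
          have hm := hmin j' hpj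
          have hi' : i = ⟨p, by omega⟩ := Fin.ext hip
          rw [hout _ (by simp), Equiv.Perm.mul_apply, hj', ← hi'] at hm
          exact hm
        · exact hσ i j (by omega) hij (by omega)
      · intro i j hi hij hj
        exact (hin ⟨p + 1 + i, by omega⟩ ⟨p + 1 + j, by omega⟩ i j i.2 j.2 rfl rfl).1
          (h2 _ _ (by simp only; omega) (by simp only; omega) (by simp only; omega))
      · intro i j hi hij hj
        exact (hin ⟨p + 1 + i, by omega⟩ ⟨p + 1 + j, by omega⟩ i j i.2 j.2 rfl rfl).1
          (h3 _ _ (by simp only; omega) (by simp only; omega) (by simp only; omega))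
    · rintro ⟨⟨h1, h2⟩, h3, h4⟩
      have hmin : ∀ j : Fin N, p < (j : ℕ) →
          (σ * via h ρ) ⟨p, by omega⟩ < (σ * via h ρ) j := by
        intro j hj
        have hv := via_in h ρ (j - (p + 1)) (by omega)
        have hj' : (⟨p + 1 + (j - (p + 1)), by omega⟩ : Fin N) = j := Fin.ext (by simp only; omega)
        rw [hj'] at hv
        rw [hout _ (by simp), Equiv.Perm.mul_apply, hv]
        exact h2 _ _ (le_refl _) (by simp only; omega) (by simp only; omega)
      refine ⟨⟨?_, ?_, ?_⟩, hmin _ (by simp only; omega)⟩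
      · intro i j hi hij hj
        rw [hout i (by omega), hout j (by omega)]
        exact h1 i j hi hij hj
      · intro i j hi hij hj
        by_cases hip : (i : ℕ) = p
        · have hi' : i = ⟨p, by omega⟩ := Fin.ext hip
          rw [hi']
          exact hmin j (by omega)
        · exact (hin i j (i - (p + 1)) (j - (p + 1)) (by omega) (by omega) (by omega)
            (by omega)).2 (h3 _ _ (by simp only; omega) (by simp only; omega) (by simp only; omega))
      · intro i j hi hij hj
        exact (hin i j (i - (p + 1)) (j - (p + 1)) (by omega) (by omega) (by omega)
            (by omega)).2 (h4 _ _ (by simp only; omega) (by simp only; omega) (by simp only; omega))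

lemma finRotate_pow_apply (n k : ℕ) (i : Fin (n + 1)) :
    (((finRotate (n + 1)) ^ k) i : ℕ) = (i + k) % (n + 1) := by
  induction k with
  | zero => simp [Nat.mod_eq_of_lt i.2]
  | succ k ih =>
    rw [pow_succ', Equiv.Perm.mul_apply, finRotate_apply, Fin.val_add, ih, Fin.val_one',
      ← Nat.add_mod, add_assoc]

/-- the block swap -/
lemma exists_blockSwap (p q r N : ℕ) (hN : p + q + r + 2 = N) :
    ∃ w : Equiv.Perm (Fin N), ((Equiv.Perm.sign w : ℤˣ) : ℤ) = (-1) ^ ((q + 1) * (r + 1)) ∧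
      (∀ i : Fin N, (i : ℕ) < p → w i = i) ∧
      (∀ i : Fin N, p ≤ (i : ℕ) → (i : ℕ) < p + r + 1 → (w i : ℕ) = i + (q + 1)) ∧
      (∀ i : Fin N, p + r + 1 ≤ (i : ℕ) → (w i : ℕ) + (r + 1) = i) := by
  have h : p + (q + r + 1 + 1) ≤ N := by omega
  have e1 : ∀ i : Fin N, p ≤ (i : ℕ) →
      (via h ((finRotate (q + r + 1 + 1)) ^ (q + 1)) i : ℕ) =
        p + ((i - p) + (q + 1)) % (q + r + 1 + 1) := by
    intro i hi
    have hv := via_in h ((finRotate (q + r + 1 + 1)) ^ (q + 1)) (i - p) (by omega)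
    have hj' : (⟨p + (i - p), by omega⟩ : Fin N) = i := Fin.ext (by simp only; omega)
    rw [hj'] at hv
    rw [hv]
    simp only [finRotate_pow_apply]
  refine ⟨via h ((finRotate (q + r + 1 + 1)) ^ (q + 1)), ?_, ?_, ?_, ?_⟩
  · rw [sign_via, map_pow, sign_finRotate]
    push_cast
    rw [← pow_mul]
    have : (q + r + 1) * (q + 1) = q * (q + 1) + (q + 1) * (r + 1) := by ring
    rw [this, pow_add, (Nat.even_mul_succ_self q).neg_one_pow, one_mul]
  · intro i hi
    exact via_out h _ i (Or.inl hi)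
  · intro i hi hi2
    rw [e1 i hi, Nat.mod_eq_of_lt (by omega)]
    omega
  · intro i hi
    rw [e1 i (by omega), Nat.mod_eq_sub_mod (by omega), Nat.mod_eq_of_lt (by omega)]
    omega

lemma swap_eq {g A : Type*} [CommRing A] {p q r N : ℕ} (hN : p + q + r + 2 = N)
    (hN' : p + r + q + 2 = N)
    (a : (Fin (p + 1) → g) → A) (b : (Fin (q + 1) → g) → A) (c : (Fin (r + 1) → g) → A)
    (x : Fin (p + q + r + 3) → g) :
    ((-1 : ℤ) ^ ((q + 1) * (r + 1))) • (∑ τ : Equiv.Perm (Fin N),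
        if (IncOn τ 0 p ∧ IncOn τ p (p + r + 1) ∧ IncOn τ (p + r + 1) N) ∧
            τ ⟨p, by omega⟩ < τ ⟨p + r + 1, by omega⟩ then
          triTerm hN' a c b (fun i => x (Fin.cast (by omega) i)) τ else 0) =
      ∑ τ : Equiv.Perm (Fin N),
        if (IncOn τ 0 p ∧ IncOn τ p (p + q + 1) ∧ IncOn τ (p + q + 1) N) ∧
            ¬ τ ⟨p, by omega⟩ < τ ⟨p + q + 1, by omega⟩ then
          triTerm hN a b c x τ else 0 := by
  obtain ⟨w, hs, w1, w2, w3⟩ := exists_blockSwap p q r N hN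
  rw [← Equiv.sum_comp (Equiv.mulRight w), Finset.smul_sum]
  refine Finset.sum_congr rfl fun τ _ => ?_
  simp only [Equiv.coe_mulRight]
  have f1 : ∀ (s : ℕ) (hs : s < N), s < p → (τ * w) ⟨s, hs⟩ = τ ⟨s, hs⟩ := by
    intro s hs h
    rw [Equiv.Perm.mul_apply, w1 _ h]
  have f2 : ∀ (s t : ℕ) (hs : s < N) (ht : t < N), p ≤ s → s < p + r + 1 → t = s + (q + 1) →
      (τ * w) ⟨s, hs⟩ = τ ⟨t, ht⟩ := by
    intro s t hs ht h h' hst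
    subst hst
    rw [Equiv.Perm.mul_apply]
    congr 1
    apply Fin.ext
    rw [w2 _ h h']
  have f3 : ∀ (s t : ℕ) (hs : s < N) (ht : t < N), p + r + 1 ≤ s → t + (r + 1) = s →
      (τ * w) ⟨s, hs⟩ = τ ⟨t, ht⟩ := by
    intro s t hs ht h hst
    rw [Equiv.Perm.mul_apply]
    congr 1
    apply Fin.ext
    have := w3 ⟨s, hs⟩ h
    simp only at this ⊢
    omega
  have hiff : ((IncOn (τ * w) 0 p ∧ IncOn (τ * w) p (p + r + 1) ∧ IncOn (τ * w) (p + r + 1) N) ∧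
            (τ * w) ⟨p, by omega⟩ < (τ * w) ⟨p + r + 1, by omega⟩) ↔
      ((IncOn τ 0 p ∧ IncOn τ p (p + q + 1) ∧ IncOn τ (p + q + 1) N) ∧
            ¬ τ ⟨p, by omega⟩ < τ ⟨p + q + 1, by omega⟩) := by
    have k1 : IncOn (τ * w) 0 p ↔ IncOn τ 0 p := by
      constructor
      · intro hh i j hi hij hj
        have := hh i j hi hij hj
        rwa [f1 _ _ (by omega), f1 _ _ (by omega)] at this
      · intro hh i j hi hij hj
        rw [f1 _ _ (by omega), f1 _ _ (by omega)]
        exact hh i j hi hij hj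
    have k2 : IncOn (τ * w) p (p + r + 1) ↔ IncOn τ (p + q + 1) N := by
      constructor
      · intro hh i j hi hij hj
        have := hh ⟨i - (q + 1), by omega⟩ ⟨j - (q + 1), by omega⟩ (by simp only; omega)
          (by simp only; omega) (by simp only; omega)
        rwa [f2 _ i _ i.2 (by omega) (by omega) (by omega),
          f2 _ j _ j.2 (by omega) (by omega) (by omega)] at this
      · intro hh i j hi hij hj
        rw [f2 i (i + (q + 1)) i.2 (by omega) (by omega) (by omega) rfl,
          f2 j (j + (q + 1)) j.2 (by omega) (by omega) (by omega) rfl]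
        exact hh _ _ (by simp only; omega) (by simp only; omega) (by simp only; omega)
    have k3 : IncOn (τ * w) (p + r + 1) N ↔ IncOn τ p (p + q + 1) := by
      constructor
      · intro hh i j hi hij hj
        have := hh ⟨i + (r + 1), by omega⟩ ⟨j + (r + 1), by omega⟩ (by simp only; omega)
          (by simp only; omega) (by simp only; omega)
        rwa [f3 _ i _ i.2 (by omega) (by omega),
          f3 _ j _ j.2 (by omega) (by omega)] at this
      · intro hh i j hi hij hj
        rw [f3 i (i - (r + 1)) i.2 (by omega) (by omega) (by omega),
          f3 j (j - (r + 1)) j.2 (by omega) (by omega) (by omega)]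
        exact hh _ _ (by simp only; omega) (by simp only; omega) (by simp only; omega)
    have k4 : (τ * w) ⟨p, by omega⟩ < (τ * w) ⟨p + r + 1, by omega⟩ ↔
        ¬ τ ⟨p, by omega⟩ < τ ⟨p + q + 1, by omega⟩ := by
      rw [f2 p (p + q + 1) _ (by omega) (by omega) (by omega) (by omega),
        f3 (p + r + 1) p _ (by omega) (by omega) (by omega)]
      refine Iff.trans ?_ not_lt.symm
      constructor
      · exact le_of_lt
      · intro hle
        refine lt_of_le_of_ne hle fun he => ?_
        have := congrArg Fin.val (τ.injective he)
        simp only at this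
        omega
    rw [k1, k2, k3, k4]
    tauto
  simp only [hiff]
  split_ifs with hc
  swap; · simp
  unfold triTerm
  rw [Equiv.Perm.sign_mul, smul_smul, Units.val_mul, hs, mul_comm (((Equiv.Perm.sign τ : ℤˣ) : ℤ)),
    ← mul_assoc, ← mul_pow, neg_one_mul, neg_neg, one_pow, one_mul, mul_right_comm]
  congr 1
  congr 1
  · congr 1
    · congr 1
      funext i
      by_cases hi : (i : ℕ) = 0
      · simp only [hi, dif_pos]; rfl
      · simp only [hi, dif_neg, not_false_eq_true]
        exact congrArg x (Fin.ext (congrArg (fun z : Fin N => (z : ℕ) + 1) (f1 (i - 1) (by omega) (by omega))))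
    · congr 1
      funext j
      exact congrArg x (Fin.ext (congrArg (fun z : Fin N => (z : ℕ) + 1) (f3 (p + r + 1 + j) (p + j) (by omega) (by omega) (by omega) (by omega))))
  · congr 1
    funext j
    exact congrArg x (Fin.ext (congrArg (fun z : Fin N => (z : ℕ) + 1) (f2 (p + j) (p + q + 1 + j) (by omega) (by omega) (by omega) (by omega) (by omega))))

/-- For a Leibniz algebra `g` over a field `K` and a commutative associative `K`-algebra
`A`, the shuffle cup product satisfies the (graded) zinbiel relation at the cochain
level: `(a∪b)∪c = a∪(b∪c) + (-1)^{q'r'} a∪(c∪b)`, where `q' = q+1` and `r' = r+1` are the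
degrees of the cochains `b : g^{q+1} → A` and `c : g^{r+1} → A`. -/
theorem cupProd_zinbiel
    {K : Type*} [Field K] {g : Type*} [AddCommGroup g] [Module K g]
    {A : Type*} [CommRing A] [Algebra K A]
    (br : g →ₗ[K] g →ₗ[K] g)
    (hleib : ∀ x y z : g, br x (br y z) = br (br x y) z - br (br x z) y)
    {p q r : ℕ}
    (a : MultilinearMap K (fun _ : Fin (p + 1) => g) A)
    (b : MultilinearMap K (fun _ : Fin (q + 1) => g) A)
    (c : MultilinearMap K (fun _ : Fin (r + 1) => g) A) :
    ∀ x : Fin (p + q + r + 3) → g,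
      cupProd (p := p + q + 1) (q := r) (cupProd ⇑a ⇑b) ⇑c
          (fun i : Fin (p + q + 1 + r + 2) => x (Fin.cast (by omega) i)) =
        cupProd (p := p) (q := q + r + 1) ⇑a (cupProd ⇑b ⇑c)
            (fun i : Fin (p + (q + r + 1) + 2) => x (Fin.cast (by omega) i)) +
          ((-1 : ℤ) ^ ((q + 1) * (r + 1))) •
            cupProd (p := p) (q := r + q + 1) ⇑a (cupProd ⇑c ⇑b)
              (fun i : Fin (p + (r + q + 1) + 2) => x (Fin.cast (by omega) i)) := by
  intro x
  rw [lhs_eq rfl, rhs_eq rfl]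
  have h2 := rhs_eq (N := p + q + r + 2) (by omega) (⇑a) (⇑c) (⇑b)
    (fun i : Fin (p + r + q + 3) => x (Fin.cast (by omega) i))
  have h3 := swap_eq (N := p + q + r + 2) rfl (by omega) (⇑a) (⇑b) (⇑c) x
  rw [← h2] at h3
  have h4 : cupProd (p := p) (q := r + q + 1) ⇑a (cupProd ⇑c ⇑b)
      (fun i : Fin (p + (r + q + 1) + 2) => x (Fin.cast (by omega) i)) =
    cupProd (p := p) (q := r + q + 1) ⇑a (cupProd ⇑c ⇑b)
      (fun i : Fin (p + (r + q + 1) + 2) => x (Fin.cast (by omega) (Fin.cast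
        (show p + (r + q + 1) + 2 = p + r + q + 3 by omega) i))) := rfl
  rw [h4, h3, ← Finset.sum_add_distrib]
  refine Finset.sum_congr rfl fun τ _ => ?_
  by_cases hT : IncOn τ 0 p ∧ IncOn τ p (p + q + 1) ∧ IncOn τ (p + q + 1) (p + q + r + 2)
  · by_cases hl : τ ⟨p, by omega⟩ < τ ⟨p + q + 1, by omega⟩
    · simp only [hT, hl, not_true_eq_false, and_true, and_false, if_true, if_false, add_zero,
        and_self]
    · simp only [hT, hl, not_false_eq_true, and_true, and_false, if_true, if_false, zero_add,
        and_self]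
  · simp only [hT, false_and, if_false, add_zero]
end
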